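/- Let (A, φ) be a scalar probability space and let x₁, x₂, …, x_{2n} ∈ A be elements such that every free cumulant of odd order in these elements vanishes, i.e. κ_{2k+1}(x_{i₁}, …, x_{i_{2k+1}}) = 0 for every k ≥ 0 and all indices i₁, …, i_{2k+1} ∈ {1, …, 2n}. Then κₙ(x₂x₃, x₄x₅, …, x_{2n−2}x_{2n−1}, x_{2n}x₁) = Σ_π κ_π(x₁, x₂, …, x_{2n}), where the sum is over all noncrossing partitions π ∈ NC(2n) that are refined by the pair partition {{1,2}, {3,4}, …, {2n−1, 2n}} (i.e. each pair {2j−1, 2j} is contained in a block of π). -/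

import Mathlib

/-!
The formula for cumulants with products as entries says that the cumulant of
`a_j = w_{2j} w_{2j+1}`, `j ∈ S`, is the sum of the `κ_P(w)` over the noncrossing partitions `P`
whose join with the pairing `{2j, 2j+1}` is trivial (`cum_products`). The reason is combinatorial:
every noncrossing `P` splits uniquely into partitions with trivial join, one on each block of the
join of `P` with the pairing, and that join is noncrossing (`reach_of_crossing`, `sum_fiber`).
Hence the sums over trivial joins satisfy the same moment–cumulant recursion as the cumulants of
the products, and the recursion has only one solution (`cancel`).

This is applied to the entries `w_2, …, w_{2n+1} = x₂, …, x_{2n}, x₁`. By traciality the cumulants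
are cyclically invariant (`cum_rotSet`): the last position `2n+1` may be swapped with position `1`,
which turns the sum into one over noncrossing partitions of `1, …, 2n`, with `x₁, …, x_{2n}` in
their natural order. Since odd cumulants vanish, only partitions into even blocks contribute, and
for these the join is trivial exactly when the complementary pairing, which in the natural order is
`{1, 2}, {3, 4}, …, {2n-1, 2n}`, refines the partition (`conn_iff`).
-/

noncomputable section

variable {A : Type*}

section Scaffold
variable [Ring A] [Algebra ℂ A] [StarRing A] [StarModule ℂ A]

/-- A faithful tracial state on a unital complex `⋆`-algebra. -/
structure IsFaithfulTracialState (φ : A →ₗ[ℂ] ℂ) : Prop where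
  unital : φ 1 = 1
  positive : ∀ a : A, 0 ≤ (φ (star a * a)).re ∧ (φ (star a * a)).im = 0
  tracial : ∀ a b : A, φ (a * b) = φ (b * a)
  faithful : ∀ a : A, φ (star a * a) = 0 → a = 0

/-- `E` is a conditional expectation onto the subalgebra with underlying set `D`. -/
def IsCondExp (D : Set A) (E : A →ₗ[ℂ] A) : Prop :=
  E 1 = 1 ∧ (∀ x : A, E x ∈ D) ∧
    ∀ d₁ ∈ D, ∀ d₂ ∈ D, ∀ x : A, E (d₁ * x * d₂) = d₁ * E x * d₂

/-- `letter a true = a`, `letter a false = star a`. -/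
def letter (a : A) : Bool → A := fun b => if b then a else star a

/-- Words `d₀ · a^{s₁} · d₁ · a^{s₂} · ⋯ · a^{sₖ} · dₖ` with the `dᵢ` running over `D`
and the pattern of letters (`true` for `a`, `false` for `star a`) given by the list. -/
def wordSet (D : Set A) (a : A) : List Bool → Set A
  | [] => D
  | b :: rest => {x | ∃ d ∈ D, ∃ w ∈ wordSet D a rest, x = d * letter a b * w}

/-- The alternating list of length `n` starting with `b`. -/
def altList : Bool → ℕ → List Bool
  | _, 0 => []
  | b, n + 1 => b :: altList (!b) n

/-- The sets `P₁₁, P₁₂, P₂₁, P₂₂` associated to `a` (indices `0,1` standing for `1,2`). -/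
def Pset (D : Set A) (E : A →ₗ[ℂ] A) (a : A) : Fin 2 → Fin 2 → Set A :=
  ![![↑(Submodule.span ℂ (⋃ m : ℕ, wordSet D a (altList false (2 * m + 1)))),
     {x | x ∈ Submodule.span ℂ (⋃ m : ℕ, wordSet D a (altList false (2 * m))) ∧ E x = 0}],
    ![{x | x ∈ Submodule.span ℂ (⋃ m : ℕ, wordSet D a (altList true (2 * m))) ∧ E x = 0},
     ↑(Submodule.span ℂ (⋃ m : ℕ, wordSet D a (altList true (2 * m + 1))))]]

/-- `a` is `R`-diagonal with amalgamation over `D` (w.r.t. the conditional expectation `E`). -/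
def RDiagWithAmalg (D : Set A) (E : A →ₗ[ℂ] A) (a : A) : Prop :=
  ∀ n : ℕ, 0 < n → ∀ (i : Fin (n + 1) → Fin 2) (x : Fin n → A),
    (∀ k : Fin n, x k ∈ Pset D E a (i k.castSucc) (i k.succ)) →
    E (List.ofFn x).prod = 0

/-- `x` and `y` are identically `D`-distributed:
`E(x^{s₁} d₁ x^{s₂} d₂ ⋯ d_{n−1} x^{sₙ}) = E(y^{s₁} d₁ ⋯ d_{n−1} y^{sₙ})`. -/
def IdentDistrib (D : Set A) (E : A →ₗ[ℂ] A) (x y : A) : Prop :=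
  ∀ n : ℕ, 0 < n → ∀ (s : Fin n → Bool) (d : Fin n → A), (∀ i, d i ∈ D) →
    E (List.ofFn fun i : Fin n =>
        letter x (s i) * (if i.val + 1 < n then d i else 1)).prod =
    E (List.ofFn fun i : Fin n =>
        letter y (s i) * (if i.val + 1 < n then d i else 1)).prod

/-- A family of subsets of `A` is free with amalgamation over `D`. -/
def FreeAmalg (D : Set A) (E : A →ₗ[ℂ] A) {ι : Type*} (X : ι → Set A) : Prop :=
  ∀ n : ℕ, 0 < n → ∀ (s : Fin n → ι) (x : Fin n → A),
    (∀ k : Fin n, x k ∈ Algebra.adjoin ℂ (X (s k) ∪ D)) →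
    (∀ (k : Fin n) (h : k.val + 1 < n), s k ≠ s ⟨k.val + 1, h⟩) →
    (∀ k : Fin n, E (x k) = 0) →
    E (List.ofFn x).prod = 0

/-- A scalar random variable: normal, commutes with `D`, with scalar `D`-moments. -/
def IsScalarRV (D : Set A) (E : A →ₗ[ℂ] A) (y : A) : Prop :=
  y * star y = star y * y ∧
  (∀ d ∈ D, d * y = y * d ∧ d * star y = star y * d) ∧
  ∀ k l : ℕ, ∃ c : ℂ, E (y ^ k * (star y) ^ l) = algebraMap ℂ A c

end Scaffold

/-- The scalars `ℂ·1` inside `A`. -/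
def scalarD (A : Type*) [Ring A] [Algebra ℂ A] : Set A := Set.range (algebraMap ℂ A)

section Scaffold2
variable [Ring A] [Algebra ℂ A] [StarRing A] [StarModule ℂ A]

/-- The conditional expectation `x ↦ φ(x)·1` associated to a state `φ`. -/
def scalarE (φ : A →ₗ[ℂ] ℂ) : A →ₗ[ℂ] A := (Algebra.linearMap ℂ A).comp φ

/-- `a` is (scalar) `R`-diagonal with respect to `φ`. -/
def RDiag (φ : A →ₗ[ℂ] ℂ) (a : A) : Prop :=
  RDiagWithAmalg (scalarD A) (scalarE φ) a

/-- A family of subsets of `A` is free with respect to the state `φ`. -/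
def FreeScalar (φ : A →ₗ[ℂ] ℂ) {ι : Type*} (X : ι → Set A) : Prop :=
  FreeAmalg (scalarD A) (scalarE φ) X

/-- `a^1 = a`, `a^{-1} = star a`. -/
def sgnPow (a : A) (t : ℤ) : A := if t = 1 then a else star a

/-- The set of balanced words in `a, star a`. -/
def balancedWords (a : A) : Set A :=
  {w | ∃ (n : ℕ) (_ : 0 < n) (t : Fin n → ℤ),
    (∀ i, t i = 1 ∨ t i = -1) ∧
    (∑ i, t i) = 0 ∧
    (∀ j : ℕ, 0 < j → j < n →
      (∑ i ∈ Finset.univ.filter (fun i : Fin n => i.val < j), t i) ≤ 0) ∧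
    w = (List.ofFn fun i : Fin n => sgnPow a (t i)).prod}

/-- The algebra `K_a`: the span of balanced words. -/
def Kset (a : A) : Set A := ↑(Submodule.span ℂ (balancedWords a))

end Scaffold2

end

noncomputable section

/-- A finite partition of `{0, …, n−1}` is noncrossing if whenever `a < b < c < d` with
`a, c` in one block and `b, d` in another, the two blocks coincide. -/
def IsNoncrossing {n : ℕ} (π : Finpartition (Finset.univ : Finset (Fin n))) : Prop :=
  ∀ a b c d : Fin n, a < b → b < c → c < d →
    ∀ B₁ ∈ π.parts, ∀ B₂ ∈ π.parts,
      a ∈ B₁ → c ∈ B₁ → b ∈ B₂ → d ∈ B₂ → B₁ = B₂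

instance finpartitionFintype {n : ℕ} :
    Fintype (Finpartition (Finset.univ : Finset (Fin n))) :=
  Fintype.ofInjective Finpartition.parts fun _ _ h => Finpartition.ext h

variable {A : Type*} [Ring A] [Algebra ℂ A]

/-- The compound quantity `κ_π(a₁, …, aₙ)`: the product over the blocks of `π` of `κ`
evaluated on the entries of the block, taken in increasing order. -/
def cumPart (κ : ∀ n : ℕ, (Fin n → A) → ℂ) {n : ℕ}
    (π : Finpartition (Finset.univ : Finset (Fin n))) (a : Fin n → A) : ℂ :=
  ∏ B ∈ π.parts, κ B.card (fun i => a ((B.orderIsoOfFin rfl i : Fin n)))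

open scoped Classical in
/-- The family `κ` satisfies the moment–cumulant formula for `φ`:
`φ(a₁ ⋯ aₙ) = Σ_{π ∈ NC(n)} κ_π(a₁, …, aₙ)`. -/
def MomentCumulant (φ : A →ₗ[ℂ] ℂ) (κ : ∀ n : ℕ, (Fin n → A) → ℂ) : Prop :=
  ∀ n : ℕ, 0 < n → ∀ a : Fin n → A,
    φ (List.ofFn a).prod =
      ∑ π : Finpartition (Finset.univ : Finset (Fin n)),
        if IsNoncrossing π then cumPart κ π a else 0

end

namespace PairProducts

open Finset

/-! ### Noncrossing partitions of finite sets of natural numbers -/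

/-- `P` is the set of blocks of a noncrossing partition of the finite set `S ⊆ ℕ`. Partitions are
kept as plain sets of blocks, with no dependence on `S` in their type, so that they can be
restricted, glued and transported along maps of the ground set. -/
structure IsNCPart (P : Finset (Finset ℕ)) (S : Finset ℕ) : Prop where
  nonempty : ∀ B ∈ P, B.Nonempty
  subset : ∀ B ∈ P, B ⊆ S
  cover : ∀ i ∈ S, ∃ B ∈ P, i ∈ B
  disj : ∀ B ∈ P, ∀ C ∈ P, ∀ i, i ∈ B → i ∈ C → B = C
  nc : ∀ a b c d : ℕ, a < b → b < c → c < d →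
    ∀ B ∈ P, ∀ C ∈ P, a ∈ B → c ∈ B → b ∈ C → d ∈ C → B = C

open scoped Classical in
/-- The finite set `NC(S)` of noncrossing partitions of `S`. -/
noncomputable def NCs (S : Finset ℕ) : Finset (Finset (Finset ℕ)) :=
  S.powerset.powerset.filter (fun P => IsNCPart P S)

lemma mem_NCs {P : Finset (Finset ℕ)} {S : Finset ℕ} : P ∈ NCs S ↔ IsNCPart P S := by
  classical
  simp only [NCs, mem_filter, mem_powerset, and_iff_right_iff_imp]
  intro h B hB
  exact mem_powerset.2 (h.subset B hB)

lemma isNCPart_singleton {S : Finset ℕ} (hS : S.Nonempty) : IsNCPart {S} S where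
  nonempty := by simpa using hS
  subset := by simp
  cover := by simp
  disj := by simp
  nc := by simp

lemma IsNCPart.eq_singleton {P : Finset (Finset ℕ)} {S : Finset ℕ} (h : IsNCPart P S)
    (hS : S ∈ P) : P = {S} := by
  ext B
  rw [mem_singleton]
  constructor
  · intro hB
    obtain ⟨i, hi⟩ := h.nonempty B hB
    exact h.disj B hB S hS i hi (h.subset B hB hi)
  · rintro rfl; exact hS

/-- The multiplicative extension of a function `f` of blocks, summed over `NC(S)`, determines `f S`
once `f` is known on proper subsets: `{S}` is the only partition with `S` as a block. All
inductions on cumulants go through this. -/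
lemma cancel {f g : Finset ℕ → ℂ} {S : Finset ℕ} (hS : S.Nonempty)
    (hfg : ∀ B, B ⊂ S → B.Nonempty → f B = g B)
    (h : ∑ P ∈ NCs S, ∏ B ∈ P, f B = ∑ P ∈ NCs S, ∏ B ∈ P, g B) : f S = g S := by
  classical
  have hmem : ({S} : Finset (Finset ℕ)) ∈ NCs S := mem_NCs.2 (isNCPart_singleton hS)
  rw [← add_sum_erase _ _ hmem, ← add_sum_erase _ _ hmem, prod_singleton, prod_singleton] at h
  have : ∑ P ∈ (NCs S).erase {S}, ∏ B ∈ P, f B = ∑ P ∈ (NCs S).erase {S}, ∏ B ∈ P, g B := by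
    refine sum_congr rfl fun P hP => prod_congr rfl fun B hB => ?_
    obtain ⟨hne, hP⟩ := mem_erase.1 hP
    have hP := mem_NCs.1 hP
    refine hfg B ((hP.subset B hB).ssubset_of_ne ?_) (hP.nonempty B hB)
    rintro rfl
    exact hne (hP.eq_singleton hB)
  rw [this] at h
  exact add_right_cancel h

/-! ### Cumulants and moments indexed by subsets of `ℕ` -/

section Cumulants

variable {A : Type*} [Ring A] [Algebra ℂ A]

/-- The cumulant `κ` of the entries `w i`, `i ∈ B`, taken in increasing order. -/
noncomputable def cum (κ : ∀ n : ℕ, (Fin n → A) → ℂ) (w : ℕ → A) (B : Finset ℕ) : ℂ :=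
  κ B.card (fun i => w (B.orderEmbOfFin rfl i))

/-- The product of the entries `w i`, `i ∈ S`, taken in increasing order. -/
noncomputable def word (w : ℕ → A) (S : Finset ℕ) : A := (S.sort.map w).prod

omit [Ring A] [Algebra ℂ A] in
lemma cum_eq (κ : ∀ n : ℕ, (Fin n → A) → ℂ) (w : ℕ → A) (B : Finset ℕ) {m : ℕ}
    (h : B.card = m) : cum κ w B = κ m (fun i => w (B.orderEmbOfFin h i)) := by
  subst h; rfl

omit [Ring A] [Algebra ℂ A] in
lemma cum_map (κ : ∀ n : ℕ, (Fin n → A) → ℂ) (w : ℕ → A) {n : ℕ} (e : Fin n ↪o ℕ)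
    (B : Finset (Fin n)) :
    cum κ w (B.map e.toEmbedding) =
      κ B.card (fun i => w (e (B.orderIsoOfFin rfl i : Fin n))) := by
  have hc : (B.map e.toEmbedding).card = B.card := card_map _
  rw [cum_eq κ w _ hc]
  congr 1
  funext i
  have := orderEmbOfFin_unique hc (f := fun i => e (B.orderEmbOfFin rfl i))
    (fun i => by simp) (fun i j hij => by simpa using hij)
  rw [← this]
  simp

omit [Ring A] [Algebra ℂ A] in
/-- Relabelling along an increasing map `e` turns a sum over noncrossing `Finpartition`s of `Fin n`
into a sum over `NC` of the image of `e`. -/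
lemma sum_transport (κ : ∀ n : ℕ, (Fin n → A) → ℂ) {n : ℕ} (e : Fin n ↪o ℕ) (w : ℕ → A)
    (Q : Finpartition (univ : Finset (Fin n)) → Prop) (Q' : Finset (Finset ℕ) → Prop)
    [DecidablePred Q'] [∀ π, Decidable (IsNoncrossing π ∧ Q π)]
    (hQ : ∀ π, Q π ↔ Q' (π.parts.image (fun B => B.map e.toEmbedding))) :
    (∑ π : Finpartition (univ : Finset (Fin n)),
      if IsNoncrossing π ∧ Q π then cumPart κ π (fun i => w (e i)) else 0) =
    ∑ P ∈ (NCs (univ.map e.toEmbedding)).filter Q', ∏ B ∈ P, cum κ w B := by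
  classical
  have hinj : Function.Injective (fun B : Finset (Fin n) => B.map e.toEmbedding) :=
    map_injective _
  rw [← sum_filter]
  refine sum_bij (fun π _ => π.parts.image (fun B => B.map e.toEmbedding)) ?_ ?_ ?_ ?_
  · intro π hπ
    obtain ⟨hnc, hq⟩ := (mem_filter.1 hπ).2
    refine mem_filter.2 ⟨mem_NCs.2 ?_, (hQ π).1 hq⟩
    constructor
    · intro B hB
      obtain ⟨C, hC, rfl⟩ := mem_image.1 hB
      simpa using π.nonempty_of_mem_parts hC
    · intro B hB
      obtain ⟨C, hC, rfl⟩ := mem_image.1 hB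
      exact map_subset_map.2 (subset_univ _)
    · intro i hi
      obtain ⟨j, -, rfl⟩ := mem_map.1 hi
      obtain ⟨C, hC, hj⟩ := π.exists_mem (mem_univ j)
      exact ⟨_, mem_image_of_mem _ hC, mem_map_of_mem _ hj⟩
    · intro B hB C hC i hi hi'
      obtain ⟨B, hB', rfl⟩ := mem_image.1 hB
      obtain ⟨C, hC', rfl⟩ := mem_image.1 hC
      obtain ⟨j, hj, rfl⟩ := mem_map.1 hi
      rw [π.eq_of_mem_parts hB' hC' hj ((mem_map' _).1 hi')]
    · intro a b c d hab hbc hcd B hB C hC ha hc hb hd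
      obtain ⟨B, hB', rfl⟩ := mem_image.1 hB
      obtain ⟨C, hC', rfl⟩ := mem_image.1 hC
      obtain ⟨a, ha', rfl⟩ := mem_map.1 ha
      obtain ⟨b, hb', rfl⟩ := mem_map.1 hb
      obtain ⟨c, hc', rfl⟩ := mem_map.1 hc
      obtain ⟨d, hd', rfl⟩ := mem_map.1 hd
      rw [hnc a b c d (by simpa using hab) (by simpa using hbc) (by simpa using hcd)
        B hB' C hC' ha' hc' hb' hd']
  · intro π _ ρ _ h
    exact Finpartition.ext (image_injective hinj h)
  · intro P hP
    obtain ⟨hP, hq⟩ := mem_filter.1 hP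
    have hP := mem_NCs.1 hP
    let g : Finset ℕ → Finset (Fin n) := fun B => univ.filter (fun i => e i ∈ B)
    have hg : ∀ B ∈ P, (g B).map e.toEmbedding = B := by
      intro B hB
      ext i
      simp only [g, mem_map, mem_filter, mem_univ, true_and]
      constructor
      · rintro ⟨j, hj, rfl⟩; exact hj
      · intro hi
        obtain ⟨j, -, rfl⟩ := mem_map.1 (hP.subset B hB hi)
        exact ⟨j, hi, rfl⟩
    let π : Finpartition (univ : Finset (Fin n)) := Finpartition.ofExistsUnique (P.image g)
      (fun _ _ => subset_univ _)
      (by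
        intro i _
        obtain ⟨B, hB, hi⟩ := hP.cover (e i) (mem_map_of_mem _ (mem_univ i))
        refine ⟨g B, ⟨mem_image_of_mem _ hB, by simpa [g] using hi⟩, ?_⟩
        rintro C ⟨hC, hiC⟩
        obtain ⟨C, hC', rfl⟩ := mem_image.1 hC
        rw [hP.disj B hB C hC' (e i) hi (by simpa [g] using hiC)])
      (by
        intro h
        obtain ⟨B, hB, h0⟩ := mem_image.1 h
        have := hP.nonempty B hB
        rw [← hg B hB, h0] at this
        simp at this)
    have hπ : π.parts = P.image g := rfl
    have himg : π.parts.image (fun B => B.map e.toEmbedding) = P := by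
      rw [hπ, image_image]
      exact (image_congr (fun B hB => hg B hB)).trans image_id
    refine ⟨π, mem_filter.2 ⟨mem_univ _, ?_, (hQ π).2 (himg ▸ hq)⟩, himg⟩
    intro a b c d hab hbc hcd B hB C hC ha hc hb hd
    rw [hπ] at hB hC
    obtain ⟨B, hB', rfl⟩ := mem_image.1 hB
    obtain ⟨C, hC', rfl⟩ := mem_image.1 hC
    simp only [g, mem_filter, mem_univ, true_and] at ha hb hc hd
    rw [hP.nc (e a) (e b) (e c) (e d) (by simpa) (by simpa) (by simpa) B hB' C hC' ha hc hb hd]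
  · intro π _
    rw [prod_image (fun B _ C _ h => hinj h)]
    exact prod_congr rfl fun B _ => (cum_map κ w e B).symm

/-- The moment–cumulant formula, for a nonempty set of positions. -/
lemma moment_eq {φ : A →ₗ[ℂ] ℂ} {κ : ∀ n : ℕ, (Fin n → A) → ℂ} (hκ : MomentCumulant φ κ)
    (w : ℕ → A) {S : Finset ℕ} (hS : S.Nonempty) :
    φ (word w S) = ∑ P ∈ NCs S, ∏ B ∈ P, cum κ w B := by
  classical
  have h := hκ S.card hS.card_pos (fun i => w (S.orderEmbOfFin rfl i))
  have h1 : (List.ofFn fun i => w (S.orderEmbOfFin rfl i)).prod = word w S := by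
    rw [word, ← listMap_orderEmbOfFin_finRange S rfl, List.map_map, List.ofFn_eq_map]
    rfl
  have h2 := sum_transport κ (S.orderEmbOfFin rfl) w (fun _ => True) (fun _ => True) (by simp)
  rw [map_orderEmbOfFin_univ, filter_true] at h2
  rw [← h1, h, ← h2]
  exact sum_congr rfl fun π _ => by simp only [and_true]

end Cumulants

/-! ### Joining a noncrossing partition with the pairing `{2j, 2j+1}` -/

/-- The union of the pairs `{2j, 2j+1}` for `j ∈ T`. -/
def dbl (T : Finset ℕ) : Finset ℕ := T.biUnion (fun j => {2 * j, 2 * j + 1})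

lemma mem_dbl {T : Finset ℕ} {m : ℕ} : m ∈ dbl T ↔ m / 2 ∈ T := by
  simp only [dbl, mem_biUnion, mem_insert, mem_singleton]
  constructor
  · rintro ⟨j, hj, h⟩
    have : m / 2 = j := by omega
    rwa [this]
  · intro h
    exact ⟨_, h, by omega⟩

/-- No proper nonempty subset `T` of `B` has `dbl T` a union of blocks of `P`. For a partition `P` of
`dbl B` this says that the join of `P` with the pairing `{2j, 2j+1}` is the one-block partition. -/
def Conn (P : Finset (Finset ℕ)) (B : Finset ℕ) : Prop :=
  ∀ T ⊆ B, T.Nonempty → (∀ C ∈ P, ∀ m ∈ C, m ∈ dbl T → C ⊆ dbl T) → T = B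

/-- Some block of `P` meets both the `j`-th and the `k`-th pair. -/
def Link (P : Finset (Finset ℕ)) (j k : ℕ) : Prop :=
  ∃ C ∈ P, ∃ m ∈ C, ∃ m' ∈ C, m / 2 = j ∧ m' / 2 = k

/-- The equivalence relation on pairs induced by the join of `P` with the pairing. -/
abbrev Reach (P : Finset (Finset ℕ)) : ℕ → ℕ → Prop := Relation.ReflTransGen (Link P)

lemma Link.symm {P : Finset (Finset ℕ)} {j k : ℕ} (h : Link P j k) : Link P k j := by
  obtain ⟨C, hC, m, hm, m', hm', h1, h2⟩ := h
  exact ⟨C, hC, m', hm', m, hm, h2, h1⟩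

lemma Reach.symm {P : Finset (Finset ℕ)} {j k : ℕ} (h : Reach P j k) : Reach P k j := by
  have : Std.Symm (Link P) := ⟨fun _ _ h => Link.symm h⟩
  exact Relation.ReflTransGen.stdSymm.symm _ _ h

/-- A chain of links from inside `p` to outside `p` has a step that leaves `p`. -/
lemma Reach.exists_crossing {P : Finset (Finset ℕ)} {j k : ℕ} (h : Reach P j k)
    (p : ℕ → Prop) (hj : p j) (hk : ¬ p k) :
    ∃ u v, Reach P j u ∧ Link P u v ∧ p u ∧ ¬ p v := by
  induction h with
  | refl => exact absurd hj hk
  | @tail b c hab hbc ih =>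
    by_cases hb : p b
    · exact ⟨b, c, hab, hbc, hb, hk⟩
    · exact ih hb

lemma link_of_crossing {P : Finset (Finset ℕ)} {D : Finset ℕ} (hP : IsNCPart P D)
    {u v s t : ℕ} (huv : Link P u v) (hst : Link P s t) (hus : u < s) (hsv : s < v)
    (ht : t < u ∨ v < t) : Link P u s := by
  obtain ⟨C, hC, m, hm, m', hm', rfl, rfl⟩ := huv
  obtain ⟨E, hE, l, hl, l', hl', rfl, rfl⟩ := hst
  have : C = E := by
    rcases ht with ht | ht
    · exact (hP.nc l' m l m' (by omega) (by omega) (by omega) E hE C hC hl' hl hm hm').symm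
    · exact hP.nc m l m' l' (by omega) (by omega) (by omega) C hC E hE hm hm' hl hl'
  subst this
  exact ⟨C, hC, m, hm, l, hl, rfl, rfl⟩

/-- The join is noncrossing: if the chains from `a` to `c` and from `b` to `d` never met, one step
`u, v` of the first would separate `b` from `d`, and a step of the second would have to cross it,
which forces the two blocks of `P` carrying these steps to coincide. -/
lemma reach_of_crossing {P : Finset (Finset ℕ)} {D : Finset ℕ} (hP : IsNCPart P D)
    {a b c d : ℕ} (hab : a < b) (hbc : b < c) (hcd : c < d) (hac : Reach P a c)
    (hbd : Reach P b d) : Reach P a b := by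
  by_contra hcon
  -- a step from outside `[b, d]` into the open interval `(b, d)`
  obtain ⟨u, v, hau, huv, hu, hv⟩ :=
    hac.exists_crossing (fun t => t < b ∨ d < t) (Or.inl hab) (by omega)
  have hav : Reach P a v := hau.tail huv
  have hne : ∀ s t, Reach P a s → Reach P b t → s ≠ t := by
    rintro s _ h1 h2 rfl
    exact hcon (h1.trans h2.symm)
  have hvb := hne v b hav .refl
  have hvd := hne v d hav hbd
  rcases hu with hu | hu
  · obtain ⟨s, t, hbs, hst, hs, ht⟩ :=
      hbd.exists_crossing (fun t => u < t ∧ t < v) (by omega) (by omega)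
    have htu := hne u t hau (hbs.tail hst)
    have htv := hne v t hav (hbs.tail hst)
    have := link_of_crossing hP huv hst hs.1 hs.2 (by omega)
    exact hne s s (hau.tail this) hbs rfl
  · obtain ⟨s, t, hds, hst, hs, ht⟩ :=
      hbd.symm.exists_crossing (fun t => v < t ∧ t < u) (by omega) (by omega)
    have hbs := hbd.trans hds
    have htu := hne u t hau (hbs.tail hst)
    have htv := hne v t hav (hbs.tail hst)
    have := link_of_crossing hP huv.symm hst hs.1 hs.2 (by omega)
    exact hne s s (hav.tail this) hbs rfl

section Join

open scoped Classical

/-- The class of `j` in `S` under `Reach P`. -/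
noncomputable def cls (P : Finset (Finset ℕ)) (S : Finset ℕ) (j : ℕ) : Finset ℕ :=
  S.filter (Reach P j)

/-- The partition `τ` of `S` for which `{dbl B | B ∈ τ}` is the join of `P` with the pairing. -/
noncomputable def joinP (P : Finset (Finset ℕ)) (S : Finset ℕ) : Finset (Finset ℕ) :=
  S.image (cls P S)

/-- The noncrossing partitions of `dbl B` whose join with the pairing is trivial. -/
noncomputable def connNCs (B : Finset ℕ) : Finset (Finset (Finset ℕ)) :=
  (NCs (dbl B)).filter (fun P => Conn P B)

lemma mem_cls {P : Finset (Finset ℕ)} {S : Finset ℕ} {j k : ℕ} :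
    k ∈ cls P S j ↔ k ∈ S ∧ Reach P j k := by
  simp [cls]

lemma cls_eq {P : Finset (Finset ℕ)} {S : Finset ℕ} {j k : ℕ} (h : Reach P j k) :
    cls P S j = cls P S k := by
  ext l
  simp only [mem_cls]
  exact and_congr_right fun _ => ⟨fun h' => h.symm.trans h', fun h' => h.trans h'⟩

lemma isNCPart_joinP {P : Finset (Finset ℕ)} {S D : Finset ℕ} (hP : IsNCPart P D) :
    IsNCPart (joinP P S) S where
  nonempty B hB := by
    obtain ⟨j, hj, rfl⟩ := mem_image.1 hB
    exact ⟨j, mem_cls.2 ⟨hj, .refl⟩⟩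
  subset B hB := by
    obtain ⟨j, hj, rfl⟩ := mem_image.1 hB
    exact filter_subset _ _
  cover i hi := ⟨_, mem_image_of_mem _ hi, mem_cls.2 ⟨hi, .refl⟩⟩
  disj B hB C hC i hi hi' := by
    obtain ⟨j, hj, rfl⟩ := mem_image.1 hB
    obtain ⟨k, hk, rfl⟩ := mem_image.1 hC
    exact cls_eq ((mem_cls.1 hi).2.trans (mem_cls.1 hi').2.symm)
  nc a b c d hab hbc hcd B hB C hC ha hc hb hd := by
    obtain ⟨j, hj, rfl⟩ := mem_image.1 hB
    obtain ⟨k, hk, rfl⟩ := mem_image.1 hC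
    rw [mem_cls] at ha hb hc hd
    have := reach_of_crossing hP hab hbc hcd (ha.2.symm.trans hc.2) (hb.2.symm.trans hd.2)
    exact cls_eq ((ha.2.trans this).trans hb.2.symm)

/-- The restriction of `P` to a union `U` of its blocks. -/
lemma IsNCPart.filter_subset {P : Finset (Finset ℕ)} {D U : Finset ℕ} (hP : IsNCPart P D)
    (hU : U ⊆ D) (hc : ∀ C ∈ P, ∀ m ∈ C, m ∈ U → C ⊆ U) :
    IsNCPart (P.filter (· ⊆ U)) U where
  nonempty B hB := hP.nonempty B (mem_filter.1 hB).1
  subset B hB := (mem_filter.1 hB).2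
  cover i hi := by
    obtain ⟨B, hB, hiB⟩ := hP.cover i (hU hi)
    exact ⟨B, mem_filter.2 ⟨hB, hc B hB i hiB hi⟩, hiB⟩
  disj B hB C hC := hP.disj B (mem_filter.1 hB).1 C (mem_filter.1 hC).1
  nc a b c d h1 h2 h3 B hB C hC := hP.nc a b c d h1 h2 h3 B (mem_filter.1 hB).1 C (mem_filter.1 hC).1

lemma dbl_mono {S T : Finset ℕ} (h : S ⊆ T) : dbl S ⊆ dbl T := fun _ hm =>
  mem_dbl.2 (h (mem_dbl.1 hm))

/-- On each block of its join, `P` restricts to a partition with trivial join. -/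
lemma filter_mem_connNCs {P : Finset (Finset ℕ)} {S : Finset ℕ} (hP : IsNCPart P (dbl S))
    {B : Finset ℕ} (hB : B ∈ joinP P S) : P.filter (· ⊆ dbl B) ∈ connNCs B := by
  obtain ⟨j, hj, rfl⟩ := mem_image.1 hB
  have hcl : ∀ C ∈ P, ∀ m ∈ C, m ∈ dbl (cls P S j) → C ⊆ dbl (cls P S j) := by
    intro C hC m hm hmB m' hm'
    rw [mem_dbl, mem_cls] at hmB ⊢
    exact ⟨mem_dbl.1 (hP.subset C hC hm'), hmB.2.tail ⟨C, hC, m, hm, m', hm', rfl, rfl⟩⟩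
  refine mem_filter.2 ⟨mem_NCs.2 (hP.filter_subset (dbl_mono (Finset.filter_subset _ _)) hcl), ?_⟩
  intro T hT ⟨t, ht⟩ hTc
  refine hT.antisymm fun k hk => ?_
  have htk : Reach P t k := (mem_cls.1 (hT ht)).2.symm.trans (mem_cls.1 hk).2
  clear hk
  induction htk with
  | refl => exact ht
  | @tail b c _ hbc ih =>
    obtain ⟨C, hC, m, hm, m', hm', rfl, rfl⟩ := hbc
    have hCB := hcl C hC m hm (mem_dbl.2 (hT ih))
    exact mem_dbl.1 (hTc C (mem_filter.2 ⟨hC, hCB⟩) m hm (mem_dbl.2 ih) hm')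

/-- The join is the only `τ` over which `P` splits into pieces with trivial join. -/
lemma eq_joinP {P τ : Finset (Finset ℕ)} {S : Finset ℕ} (hP : IsNCPart P (dbl S))
    (hτ : IsNCPart τ S) (h : ∀ B ∈ τ, P.filter (· ⊆ dbl B) ∈ connNCs B) :
    joinP P S = τ := by
  have key : ∀ B ∈ τ, ∀ j ∈ B, cls P S j = B := by
    intro B hB j hj
    obtain ⟨hpart, hconn⟩ := mem_filter.1 (h B hB)
    have hpart := mem_NCs.1 hpart
    refine hconn _ ?_ ⟨j, mem_cls.2 ⟨hτ.subset B hB hj, .refl⟩⟩ ?_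
    · intro k hk
      have hjk := (mem_cls.1 hk).2
      clear hk
      induction hjk with
      | refl => exact hj
      | @tail b c _ hbc ih =>
        obtain ⟨C, hC, m, hm, m', hm', rfl, rfl⟩ := hbc
        obtain ⟨C', hC', hmC'⟩ := hpart.cover m (mem_dbl.2 ih)
        obtain ⟨hC', hsub⟩ := mem_filter.1 hC'
        obtain rfl := hP.disj C hC C' hC' m hm hmC'
        exact mem_dbl.1 (hsub hm')
    · intro C hC m hm hmT m' hm'
      obtain ⟨hC, -⟩ := mem_filter.1 hC
      rw [mem_dbl, mem_cls] at hmT ⊢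
      exact ⟨mem_dbl.1 (hP.subset C hC hm'), hmT.2.tail ⟨C, hC, m, hm, m', hm', rfl, rfl⟩⟩
  ext B
  constructor
  · intro hB
    obtain ⟨j, hj, rfl⟩ := mem_image.1 hB
    obtain ⟨B, hB, hjB⟩ := hτ.cover j hj
    rwa [key B hB j hjB]
  · intro hB
    obtain ⟨j, hj⟩ := hτ.nonempty B hB
    exact mem_image.2 ⟨j, hτ.subset B hB hj, key B hB j hj⟩

/-- Noncrossing partitions of the sets `dbl B`, for `B` running over the blocks of a noncrossing
partition `τ`, assemble to a noncrossing partition of `dbl S`. -/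
lemma isNCPart_glue {τ : Finset (Finset ℕ)} {S : Finset ℕ} (hτ : IsNCPart τ S)
    (p : ∀ B ∈ τ, Finset (Finset ℕ)) (hp : ∀ B hB, IsNCPart (p B hB) (dbl B)) :
    IsNCPart (τ.attach.biUnion fun x => p x.1 x.2) (dbl S) where
  nonempty C hC := by
    obtain ⟨⟨B, hB⟩, -, hC⟩ := mem_biUnion.1 hC
    exact (hp B hB).nonempty C hC
  subset C hC := by
    obtain ⟨⟨B, hB⟩, -, hC⟩ := mem_biUnion.1 hC
    exact ((hp B hB).subset C hC).trans (dbl_mono (hτ.subset B hB))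
  cover i hi := by
    obtain ⟨B, hB, hiB⟩ := hτ.cover _ (mem_dbl.1 hi)
    obtain ⟨C, hC, hiC⟩ := (hp B hB).cover i (mem_dbl.2 hiB)
    exact ⟨C, mem_biUnion.2 ⟨⟨B, hB⟩, mem_attach _ _, hC⟩, hiC⟩
  disj C hC E hE i hi hi' := by
    obtain ⟨⟨B, hB⟩, -, hC⟩ := mem_biUnion.1 hC
    obtain ⟨⟨B', hB'⟩, -, hE⟩ := mem_biUnion.1 hE
    obtain rfl := hτ.disj B hB B' hB' (i / 2) (mem_dbl.1 ((hp B hB).subset C hC hi))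
      (mem_dbl.1 ((hp B' hB').subset E hE hi'))
    exact (hp B hB).disj C hC E hE i hi hi'
  nc a b c d hab hbc hcd C hC E hE ha hc hb hd := by
    obtain ⟨⟨B, hB⟩, -, hC⟩ := mem_biUnion.1 hC
    obtain ⟨⟨B', hB'⟩, -, hE⟩ := mem_biUnion.1 hE
    have ha' := mem_dbl.1 ((hp B hB).subset C hC ha)
    have hc' := mem_dbl.1 ((hp B hB).subset C hC hc)
    have hb' := mem_dbl.1 ((hp B' hB').subset E hE hb)
    have hd' := mem_dbl.1 ((hp B' hB').subset E hE hd)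
    have hBB : B = B' := by
      by_contra hne
      have h1 : a / 2 ≠ b / 2 := fun h =>
        hne (hτ.disj B hB B' hB' _ ha' (h ▸ hb'))
      have h2 : b / 2 ≠ c / 2 := fun h =>
        hne (hτ.disj B hB B' hB' _ hc' (h ▸ hb'))
      have h3 : c / 2 ≠ d / 2 := fun h =>
        hne (hτ.disj B hB B' hB' _ hc' (h ▸ hd'))
      exact hne (hτ.nc (a / 2) (b / 2) (c / 2) (d / 2) (by omega) (by omega) (by omega)
        B hB B' hB' ha' hc' hb' hd')
    subst hBB
    exact (hp B hB).nc a b c d hab hbc hcd C hC E hE ha hc hb hd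

lemma filter_glue {τ : Finset (Finset ℕ)} {S : Finset ℕ} (hτ : IsNCPart τ S)
    (p : ∀ B ∈ τ, Finset (Finset ℕ)) (hp : ∀ B hB, IsNCPart (p B hB) (dbl B))
    (B : Finset ℕ) (hB : B ∈ τ) :
    (τ.attach.biUnion fun x => p x.1 x.2).filter (· ⊆ dbl B) = p B hB := by
  ext C
  rw [mem_filter, mem_biUnion]
  constructor
  · rintro ⟨⟨⟨B', hB'⟩, -, hC⟩, hsub⟩
    obtain ⟨m, hm⟩ := (hp B' hB').nonempty C hC
    obtain rfl := hτ.disj B hB B' hB' (m / 2) (mem_dbl.1 (hsub hm))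
      (mem_dbl.1 ((hp B' hB').subset C hC hm))
    exact hC
  · intro hC
    exact ⟨⟨⟨B, hB⟩, mem_attach _ _, hC⟩, (hp B hB).subset C hC⟩

lemma glue_filter {P τ : Finset (Finset ℕ)} {S : Finset ℕ} (hP : IsNCPart P (dbl S))
    (hτ : IsNCPart τ S) (h : ∀ B ∈ τ, IsNCPart (P.filter (· ⊆ dbl B)) (dbl B)) :
    (τ.attach.biUnion fun x => P.filter (· ⊆ dbl x.1)) = P := by
  ext C
  rw [mem_biUnion]
  constructor
  · rintro ⟨B, -, hC⟩
    exact (mem_filter.1 hC).1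
  · intro hC
    obtain ⟨m, hm⟩ := hP.nonempty C hC
    obtain ⟨B, hB, hmB⟩ := hτ.cover (m / 2) (mem_dbl.1 (hP.subset C hC hm))
    obtain ⟨C', hC', hmC'⟩ := (h B hB).cover m (mem_dbl.2 hmB)
    obtain rfl := hP.disj C hC C' (mem_filter.1 hC').1 m hm hmC'
    exact ⟨⟨B, hB⟩, mem_attach _ _, hC'⟩

/-- Partitions with join `τ` are families, indexed by the blocks `B` of `τ`, of partitions of `dbl B`
with trivial join. -/
lemma sum_fiber (F : Finset ℕ → ℂ) {τ : Finset (Finset ℕ)} {S : Finset ℕ}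
    (hτ : IsNCPart τ S) :
    ∏ B ∈ τ, ∑ P ∈ connNCs B, ∏ C ∈ P, F C =
      ∑ P ∈ (NCs (dbl S)).filter (fun P => joinP P S = τ), ∏ C ∈ P, F C := by
  have hpi : ∀ {p : ∀ B ∈ τ, Finset (Finset ℕ)}, p ∈ τ.pi connNCs →
      ∀ B hB, IsNCPart (p B hB) (dbl B) := fun hp B hB =>
    mem_NCs.1 (mem_filter.1 (mem_pi.1 hp B hB)).1
  rw [prod_sum]
  refine sum_bij' (fun p _ => τ.attach.biUnion fun x => p x.1 x.2)
    (fun P _ => fun B _ => P.filter (· ⊆ dbl B)) ?_ ?_ ?_ ?_ ?_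
  · intro p hp
    have hg := isNCPart_glue hτ p (hpi hp)
    refine mem_filter.2 ⟨mem_NCs.2 hg, eq_joinP hg hτ fun B hB => ?_⟩
    rw [filter_glue hτ p (hpi hp) B hB]
    exact mem_pi.1 hp B hB
  · intro P hP
    obtain ⟨hP', rfl⟩ := mem_filter.1 hP
    exact mem_pi.2 fun B hB => filter_mem_connNCs (mem_NCs.1 hP') hB
  · intro p hp
    funext B hB
    exact filter_glue hτ p (hpi hp) B hB
  · intro P hP
    obtain ⟨hP', rfl⟩ := mem_filter.1 hP
    exact glue_filter (mem_NCs.1 hP') hτ fun B hB =>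
      mem_NCs.1 (mem_filter.1 (filter_mem_connNCs (mem_NCs.1 hP') hB)).1
  · intro p hp
    have hd : Set.PairwiseDisjoint (τ.attach : Set {B // B ∈ τ}) (fun x => p x.1 x.2) := by
      rintro ⟨B, hB⟩ - ⟨B', hB'⟩ - hne
      refine disjoint_left.2 fun C hC hC' => hne ?_
      obtain ⟨m, hm⟩ := (hpi hp B hB).nonempty C hC
      exact Subtype.ext (hτ.disj B hB B' hB' (m / 2)
        (mem_dbl.1 ((hpi hp B hB).subset C hC hm))
        (mem_dbl.1 ((hpi hp B' hB').subset C hC' hm)))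
    exact (prod_biUnion hd).symm

lemma sum_NCs_dbl (F : Finset ℕ → ℂ) (S : Finset ℕ) :
    ∑ P ∈ NCs (dbl S), ∏ C ∈ P, F C =
      ∑ τ ∈ NCs S, ∏ B ∈ τ, ∑ P ∈ connNCs B, ∏ C ∈ P, F C := by
  rw [← sum_fiberwise_of_maps_to (t := NCs S) (g := fun P => joinP P S)
    (fun P hP => mem_NCs.2 (isNCPart_joinP (mem_NCs.1 hP)))]
  exact sum_congr rfl fun τ hτ => (sum_fiber F (mem_NCs.1 hτ)).symm

end Join

/-! ### Cumulants with products of pairs as entries -/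

section Products

variable {A : Type*} [Ring A] [Algebra ℂ A]

lemma sort_dbl (S : Finset ℕ) :
    (dbl S).sort = S.sort.flatMap (fun j => [2 * j, 2 * j + 1]) := by
  have hp : (S.sort.flatMap (fun j => [2 * j, 2 * j + 1])).Pairwise (· < ·) := by
    rw [List.pairwise_flatMap]
    refine ⟨fun j _ => by simp, (sortedLT_sort S).pairwise.imp fun {a b} hab => ?_⟩
    intro x hx y hy
    simp only [List.mem_cons, List.not_mem_nil, or_false] at hx hy
    omega
  have hS : (S.sort.flatMap (fun j => [2 * j, 2 * j + 1])).toFinset = dbl S := by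
    ext m
    simp [dbl]
  rw [← hS]
  exact (List.toFinset_sort (r := (· ≤ ·)) hp.nodup).2 (hp.imp fun h => h.le)

omit [Algebra ℂ A] in
lemma word_dbl (w : ℕ → A) (S : Finset ℕ) :
    word w (dbl S) = word (fun j => w (2 * j) * w (2 * j + 1)) S := by
  rw [word, word, sort_dbl]
  induction S.sort with
  | nil => simp
  | cons j l ih =>
    simp only [List.flatMap_cons, List.map_append, List.prod_append, ih, List.map_cons,
      List.prod_cons, List.map_nil, List.prod_nil, mul_one]

/-- The formula for cumulants with products as entries, for products of two factors. Both sides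
solve the same recursion, by `sum_NCs_dbl`. -/
lemma cum_products {φ : A →ₗ[ℂ] ℂ} {κ : ∀ n : ℕ, (Fin n → A) → ℂ} (hκ : MomentCumulant φ κ)
    (w : ℕ → A) (S : Finset ℕ) (hS : S.Nonempty) :
    cum κ (fun j => w (2 * j) * w (2 * j + 1)) S =
      ∑ P ∈ connNCs S, ∏ C ∈ P, cum κ w C := by
  induction S using Finset.strongInduction with
  | H S ih =>
    refine cancel (g := fun S => ∑ P ∈ connNCs S, ∏ C ∈ P, cum κ w C) hS
      (fun B hB hne => ih B hB hne) ?_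
    have hd : (dbl S).Nonempty := by
      obtain ⟨j, hj⟩ := hS
      exact ⟨2 * j, mem_dbl.2 (by simpa using hj)⟩
    rw [← moment_eq hκ _ hS, ← word_dbl, moment_eq hκ _ hd, sum_NCs_dbl]

end Products

/-! ### Cyclic invariance of the cumulants -/

section Rotation

/-- The transposition of the positions `1` and `N`. On subsets of `[1, N)` it moves a first entry at
position `1` to the last position `N`, so it implements a cyclic rotation of the entries. -/
def rot (N : ℕ) : ℕ ≃ ℕ := Equiv.swap 1 N

/-- The image of a block under `rot N`. -/
def rotSet (N : ℕ) (B : Finset ℕ) : Finset ℕ := B.map (rot N).toEmbedding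

/-- The image of a partition under `rot N`. -/
def rotPart (N : ℕ) (P : Finset (Finset ℕ)) : Finset (Finset ℕ) := P.image (rotSet N)

lemma rot_rot (N i : ℕ) : rot N (rot N i) = i := Equiv.swap_apply_self _ _ _

lemma mem_rotSet {N i : ℕ} {B : Finset ℕ} : i ∈ rotSet N B ↔ rot N i ∈ B := by
  rw [rotSet, mem_map_equiv]
  rfl

lemma rotSet_rotSet (N : ℕ) (B : Finset ℕ) : rotSet N (rotSet N B) = B := by
  ext i
  rw [mem_rotSet, mem_rotSet, rot_rot]

lemma rotPart_rotPart (N : ℕ) (P : Finset (Finset ℕ)) : rotPart N (rotPart N P) = P := by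
  rw [rotPart, rotPart, image_image]
  exact (image_congr fun B _ => rotSet_rotSet N B).trans image_id

lemma mem_rotPart {N : ℕ} {B : Finset ℕ} {P : Finset (Finset ℕ)} :
    B ∈ rotPart N P ↔ rotSet N B ∈ P := by
  constructor
  · intro h
    obtain ⟨C, hC, rfl⟩ := mem_image.1 h
    rwa [rotSet_rotSet]
  · intro h
    exact mem_image.2 ⟨_, h, rotSet_rotSet N B⟩

lemma rot_of_ne {N i : ℕ} (h1 : i ≠ 1) (h2 : i ≠ N) : rot N i = i :=
  Equiv.swap_apply_of_ne_of_ne h1 h2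

lemma rot_one (N : ℕ) : rot N 1 = N := Equiv.swap_apply_left _ _

lemma rot_self (N : ℕ) : rot N N = 1 := Equiv.swap_apply_right _ _

/-- Noncrossing partitions stay noncrossing when the least position is moved to the far end, or the
other way round. -/
lemma isNCPart_rotPart {N : ℕ} {P : Finset (Finset ℕ)} {S : Finset ℕ}
    (hP : IsNCPart P S) (hS : S ⊆ Ico 1 N ∨ S ⊆ Ioc 1 N) :
    IsNCPart (rotPart N P) (rotSet N S) where
  nonempty B hB := by
    obtain ⟨C, hC, rfl⟩ := mem_image.1 hB
    exact (hP.nonempty C hC).map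
  subset B hB := by
    obtain ⟨C, hC, rfl⟩ := mem_image.1 hB
    exact map_subset_map.2 (hP.subset C hC)
  cover i hi := by
    obtain ⟨C, hC, hiC⟩ := hP.cover _ (mem_rotSet.1 hi)
    exact ⟨_, mem_image_of_mem _ hC, mem_rotSet.2 hiC⟩
  disj B hB C hC i hi hi' := by
    obtain ⟨B, hB', rfl⟩ := mem_image.1 hB
    obtain ⟨C, hC', rfl⟩ := mem_image.1 hC
    rw [hP.disj B hB' C hC' _ (mem_rotSet.1 hi) (mem_rotSet.1 hi')]
  nc a b c d hab hbc hcd B hB C hC ha hc hb hd := by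
    obtain ⟨B, hB', rfl⟩ := mem_image.1 hB
    obtain ⟨C, hC', rfl⟩ := mem_image.1 hC
    rw [mem_rotSet] at ha hb hc hd
    have hSB := hP.subset B hB'
    have hSC := hP.subset C hC'
    have h1 := rot_one N
    have h2 := rot_self N
    rcases hS with hS | hS
    · have hr : ∀ i, rot N i ∈ Ico 1 N →
          (i = N ∧ rot N i = 1) ∨ (rot N i = i ∧ 1 < i ∧ i < N) := by
        intro i hi
        rw [mem_Ico] at hi
        by_cases hi1 : i = 1
        · subst hi1; omega
        · by_cases hiN : i = N
          · subst hiN; exact Or.inl ⟨rfl, h2⟩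
          · rw [rot_of_ne hi1 hiN] at hi ⊢
            omega
      have ra := hr a (hS (hSB ha))
      have rb := hr b (hS (hSC hb))
      have rc := hr c (hS (hSB hc))
      have rd := hr d (hS (hSC hd))
      have ea : rot N a = a := by omega
      have eb : rot N b = b := by omega
      have ec : rot N c = c := by omega
      rw [ea] at ha
      rw [eb] at hb
      rw [ec] at hc
      rcases rd with ⟨-, ed⟩ | ⟨ed, -⟩ <;> rw [ed] at hd
      · rw [hP.nc 1 a b c (by omega) hab hbc C hC' B hB' hd hb ha hc]
      · rw [hP.nc a b c d hab hbc hcd B hB' C hC' ha hc hb hd]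
    · have hr : ∀ i, rot N i ∈ Ioc 1 N →
          (i = 1 ∧ rot N i = N) ∨ (rot N i = i ∧ 1 < i ∧ i < N) := by
        intro i hi
        rw [mem_Ioc] at hi
        by_cases hiN : i = N
        · subst hiN; omega
        · by_cases hi1 : i = 1
          · subst hi1; exact Or.inl ⟨rfl, h1⟩
          · rw [rot_of_ne hi1 hiN] at hi ⊢
            omega
      have ra := hr a (hS (hSB ha))
      have rb := hr b (hS (hSC hb))
      have rc := hr c (hS (hSB hc))
      have rd := hr d (hS (hSC hd))
      have eb : rot N b = b := by omega
      have ec : rot N c = c := by omega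
      have ed : rot N d = d := by omega
      rw [eb] at hb
      rw [ec] at hc
      rw [ed] at hd
      rcases ra with ⟨-, ea⟩ | ⟨ea, -⟩ <;> rw [ea] at ha
      · rw [hP.nc b c d N hbc hcd (by omega) C hC' B hB' hb hd hc ha]
      · rw [hP.nc a b c d hab hbc hcd B hB' C hC' ha hc hb hd]

lemma rotSet_Ico_subset {N : ℕ} {S : Finset ℕ} (hS : S ⊆ Ico 1 N) : rotSet N S ⊆ Ioc 1 N := by
  intro i hi
  have h := mem_Ico.1 (hS (mem_rotSet.1 hi))
  rw [mem_Ioc]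
  by_cases hi1 : i = 1
  · subst hi1
    rw [rot_one] at h
    omega
  · by_cases hiN : i = N
    · subst hiN
      rw [rot_self] at h
      omega
    · rw [rot_of_ne hi1 hiN] at h
      omega

lemma sum_rotPart {N : ℕ} {S : Finset ℕ} (hS : S ⊆ Ico 1 N) (f : Finset (Finset ℕ) → ℂ) :
    ∑ P ∈ NCs (rotSet N S), f P = ∑ P ∈ NCs S, f (rotPart N P) := by
  refine sum_nbij' (rotPart N) (rotPart N) ?_ ?_ ?_ ?_ ?_
  · intro P hP
    have := isNCPart_rotPart (mem_NCs.1 hP) (Or.inr (rotSet_Ico_subset hS))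
    rw [rotSet_rotSet] at this
    exact mem_NCs.2 this
  · intro P hP
    exact mem_NCs.2 (isNCPart_rotPart (mem_NCs.1 hP) (Or.inl hS))
  · intro P _
    exact rotPart_rotPart N P
  · intro P _
    exact rotPart_rotPart N P
  · intro P _
    rw [rotPart_rotPart]

lemma prod_rotPart (N : ℕ) (P : Finset (Finset ℕ)) (F : Finset ℕ → ℂ) :
    ∏ B ∈ rotPart N P, F B = ∏ B ∈ P, F (rotSet N B) :=
  prod_image fun B _ C _ h => by
    rw [← rotSet_rotSet N B, h, rotSet_rotSet]

variable {A : Type*} [Ring A] [Algebra ℂ A]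

lemma word_rotSet {φ : A →ₗ[ℂ] ℂ} (htr : ∀ a b : A, φ (a * b) = φ (b * a)) {N : ℕ}
    {w : ℕ → A} (hw : w N = w 1) {S : Finset ℕ} (hS : S ⊆ Ico 1 N) :
    φ (word w (rotSet N S)) = φ (word w S) := by
  have hfix : ∀ i ∈ S, i ≠ 1 → rot N i = i := fun i hi h1 =>
    rot_of_ne h1 (by have := mem_Ico.1 (hS hi); omega)
  by_cases h1 : 1 ∈ S
  · have hN := mem_Ico.1 (hS h1)
    have hT : ∀ i ∈ S.erase 1, 1 < i ∧ i < N := fun i hi => by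
      have := mem_Ico.1 (hS (mem_of_mem_erase hi))
      have := ne_of_mem_erase hi
      omega
    have e1 : S.sort = 1 :: (S.erase 1).sort := by
      conv_lhs => rw [← insert_erase h1]
      exact sort_insert (r := (· ≤ ·)) (fun b hb => (hT b hb).1.le) (notMem_erase _ _)
    have e2 : (rotSet N S).sort = (S.erase 1).sort ++ [N] := by
      have hp : ((S.erase 1).sort ++ [N]).Pairwise (· < ·) := by
        rw [List.pairwise_append]
        refine ⟨(sortedLT_sort _).pairwise, by simp, ?_⟩
        intro a ha b hb
        rw [List.mem_singleton] at hb
        rw [hb]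
        exact (hT a ((mem_sort _).1 ha)).2
      have hSet : ((S.erase 1).sort ++ [N]).toFinset = rotSet N S := by
        ext i
        rw [List.mem_toFinset, List.mem_append, mem_sort, List.mem_singleton, mem_rotSet]
        constructor
        · rintro (hi | rfl)
          · rw [hfix i (mem_of_mem_erase hi) (ne_of_mem_erase hi)]
            exact mem_of_mem_erase hi
          · rwa [rot_self]
        · intro hi
          by_cases hiN : i = N
          · exact Or.inr hiN
          · left
            by_cases hi1 : i = 1
            · subst hi1
              rw [rot_one] at hi
              have := mem_Ico.1 (hS hi)
              omega
            · rw [rot_of_ne hi1 hiN] at hi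
              exact mem_erase.2 ⟨hi1, hi⟩
      rw [← hSet]
      exact (List.toFinset_sort (r := (· ≤ ·)) hp.nodup).2 (hp.imp fun h => h.le)
    rw [word, word, e1, e2, List.map_append, List.prod_append, htr]
    simp [hw]
  · have : rotSet N S = S := by
      ext i
      rw [mem_rotSet]
      constructor
      · intro hi
        have h := hfix _ hi (fun h => h1 (h ▸ hi))
        rw [rot_rot] at h
        rwa [h]
      · intro hi
        rwa [hfix i hi (fun h => h1 (h ▸ hi))]
    rw [this]

/-- Cumulants of a tracial functional are invariant under cyclic rotation of their entries. -/
lemma cum_rotSet {φ : A →ₗ[ℂ] ℂ} (htr : ∀ a b : A, φ (a * b) = φ (b * a))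
    {κ : ∀ n : ℕ, (Fin n → A) → ℂ} (hκ : MomentCumulant φ κ) {N : ℕ}
    {w : ℕ → A} (hw : w N = w 1) (S : Finset ℕ) (hS : S ⊆ Ico 1 N) (hne : S.Nonempty) :
    cum κ w (rotSet N S) = cum κ w S := by
  induction S using Finset.strongInduction with
  | H S ih =>
    refine cancel (f := fun B => cum κ w (rotSet N B)) (g := cum κ w) hne
      (fun B hB hneB => ih B hB (hB.subset.trans hS) hneB) ?_
    have hne' : (rotSet N S).Nonempty := hne.map
    rw [← moment_eq hκ _ hne, ← word_rotSet htr hw hS, moment_eq hκ _ hne', sum_rotPart hS]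
    exact sum_congr rfl fun P _ => (prod_rotPart N P _).symm

end Rotation

/-! ### Trivial joins for partitions into even blocks -/

section Parity

open scoped Classical

/-- A union of blocks of even size has even size. -/
lemma IsNCPart.even_card {P : Finset (Finset ℕ)} {D U : Finset ℕ} (hP : IsNCPart P D)
    (heven : ∀ C ∈ P, Even C.card) (hU : U ⊆ D)
    (hc : ∀ C ∈ P, ∀ m ∈ C, m ∈ U → C ⊆ U) : Even U.card := by
  have h := hP.filter_subset hU hc
  have : U = (P.filter (· ⊆ U)).biUnion id := by
    ext i
    rw [mem_biUnion]
    exact ⟨fun hi => h.cover i hi, fun ⟨B, hB, hi⟩ => h.subset B hB hi⟩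
  rw [this, card_biUnion]
  · exact even_sum _ fun C hC => heven C (mem_filter.1 hC).1
  · intro B hB C hC hne
    exact disjoint_left.2 fun i hi hi' => hne (h.disj B hB C hC i hi hi')

/-- For a noncrossing partition into even blocks, the join with the pairing `{2j, 2j+1}` is trivial
if and only if the complementary cyclic pairing `{2j+1, 2j+2}`, `{2n+1, 2}` refines it. If the
block of `2j+1` continues, cyclically, with an element `v` other than the expected one, then the
positions strictly between `2j+1` and `v` form a union of blocks, hence are even in number, hence
form a union of pairs, which contradicts triviality of the join. -/
lemma conn_iff {P : Finset (Finset ℕ)} {n : ℕ} (hn : 0 < n)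
    (hP : IsNCPart P (dbl (Ico 1 (n + 1)))) (heven : ∀ C ∈ P, Even C.card) :
    Conn P (Ico 1 (n + 1)) ↔
      (∀ j, 1 ≤ j → j < n → ∃ B ∈ P, 2 * j + 1 ∈ B ∧ 2 * j + 2 ∈ B) ∧
        ∃ B ∈ P, 2 * n + 1 ∈ B ∧ 2 ∈ B := by
  have hD : ∀ m, m ∈ dbl (Ico 1 (n + 1)) ↔ 2 ≤ m ∧ m ≤ 2 * n + 1 := fun m => by
    rw [mem_dbl, mem_Ico]; omega
  constructor
  · intro hconn
    -- the element following `2 * j + 1` cyclically in its block is the expected one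
    have key : ∀ j, 1 ≤ j → j ≤ n → ∃ B ∈ P, 2 * j + 1 ∈ B ∧
        ((j < n ∧ 2 * j + 2 ∈ B) ∨ (j = n ∧ 2 ∈ B)) := by
      intro j hj1 hjn
      obtain ⟨V, hV, hjV⟩ := hP.cover (2 * j + 1) ((hD _).2 (by omega))
      refine ⟨V, hV, hjV, ?_⟩
      by_cases hgt : ∃ m ∈ V, 2 * j + 1 < m
      · -- let `v` be the successor of `2 * j + 1` in `V`
        obtain ⟨hvV, hjv⟩ := Nat.find_spec hgt
        have hmin : ∀ m ∈ V, 2 * j + 1 < m → Nat.find hgt ≤ m := fun m hm h =>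
          Nat.find_min' hgt ⟨hm, h⟩
        generalize Nat.find hgt = v at hvV hjv hmin
        have hvD := (hD v).1 (hP.subset V hV hvV)
        have hclosed : ∀ C ∈ P, ∀ m ∈ C, m ∈ Ioo (2 * j + 1) v → C ⊆ Ioo (2 * j + 1) v := by
          intro C hC m hm hmU m' hm'
          rw [mem_Ioo] at hmU ⊢
          have hCV : C ≠ V := by
            rintro rfl
            have := hmin m hm hmU.1
            omega
          by_contra hcon
          have h1 : m' ≠ 2 * j + 1 := by
            rintro rfl
            exact hCV (hP.disj C hC V hV _ hm' hjV)
          have h2 : m' ≠ v := by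
            rintro rfl
            exact hCV (hP.disj C hC V hV _ hm' hvV)
          rcases lt_or_ge m' (2 * j + 1) with h | h
          · exact hCV (hP.nc m' (2 * j + 1) m v h hmU.1 hmU.2 C hC V hV hm' hm hjV hvV)
          · exact hCV (hP.nc (2 * j + 1) m v m' hmU.1 hmU.2 (by omega) V hV C hC
              hjV hvV hm hm').symm
        have hev := hP.even_card heven (fun m hm => (hD m).2 (by
          rw [mem_Ioo] at hm; omega)) hclosed
        rw [Nat.card_Ioo] at hev
        obtain ⟨r, hr⟩ := hev
        have hvk : v = 2 * (j + 1 + r) := by omega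
        rcases Nat.eq_zero_or_pos r with rfl | hr0
        · left
          refine ⟨by omega, ?_⟩
          rwa [show 2 * j + 2 = v by omega]
        · exfalso
          have hT : dbl (Ioo j (j + 1 + r)) = Ioo (2 * j + 1) v := by
            ext m
            rw [mem_dbl, mem_Ioo, mem_Ioo]
            omega
          have := hconn (Ioo j (j + 1 + r))
            (fun m hm => by rw [mem_Ioo] at hm; rw [mem_Ico]; omega)
            ⟨j + 1, by rw [mem_Ioo]; omega⟩ (by rw [hT]; exact hclosed)
          have hjm : j ∈ Ioo j (j + 1 + r) := by
            rw [this, mem_Ico]; omega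
          simp at hjm
      · -- `2 * j + 1` is the maximum of `V`; its cyclic successor is the minimum `v`
        push Not at hgt
        have hex : ∃ m, m ∈ V := ⟨_, hjV⟩
        have hvV := Nat.find_spec hex
        have hmin : ∀ m ∈ V, Nat.find hex ≤ m := fun m hm => Nat.find_min' hex hm
        generalize Nat.find hex = v at hvV hmin
        have hvD := (hD v).1 (hP.subset V hV hvV)
        have hvj := hgt v hvV
        have hclosed : ∀ C ∈ P, ∀ m ∈ C, m ∈ Icc v (2 * j + 1) → C ⊆ Icc v (2 * j + 1) := by
          intro C hC m hm hmU m' hm'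
          rw [mem_Icc] at hmU ⊢
          by_cases hCV : C = V
          · subst hCV
            exact ⟨hmin m' hm', hgt m' hm'⟩
          by_contra hcon
          have h1 : m ≠ 2 * j + 1 := by
            rintro rfl
            exact hCV (hP.disj C hC V hV _ hm hjV)
          have h2 : m ≠ v := by
            rintro rfl
            exact hCV (hP.disj C hC V hV _ hm hvV)
          rcases lt_or_ge m' v with h | h
          · exact hCV (hP.nc m' v m (2 * j + 1) h (by omega) (by omega) C hC V hV hm' hm hvV hjV)
          · exact hCV (hP.nc v m (2 * j + 1) m' (by omega) (by omega) (by omega) V hV C hC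
              hvV hjV hm hm').symm
        have hev := hP.even_card heven (fun m hm => (hD m).2 (by
          rw [mem_Icc] at hm; omega)) hclosed
        rw [Nat.card_Icc] at hev
        obtain ⟨r, hr⟩ := hev
        have hvk : v = 2 * (j + 1 - r) := by omega
        have hT : dbl (Icc (j + 1 - r) j) = Icc v (2 * j + 1) := by
          ext m
          rw [mem_dbl, mem_Icc, mem_Icc]
          omega
        have := hconn (Icc (j + 1 - r) j)
          (fun m hm => by rw [mem_Icc] at hm; rw [mem_Ico]; omega)
          ⟨j, by rw [mem_Icc]; omega⟩ (by rw [hT]; exact hclosed)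
        have h1 : 1 ∈ Icc (j + 1 - r) j := by rw [this, mem_Ico]; omega
        have h2 : n ∈ Icc (j + 1 - r) j := by rw [this, mem_Ico]; omega
        rw [mem_Icc] at h1 h2
        right
        refine ⟨by omega, ?_⟩
        rwa [show 2 = v by omega]
    constructor
    · intro j hj1 hjn
      obtain ⟨B, hB, h1, h2⟩ := key j hj1 hjn.le
      exact ⟨B, hB, h1, by rcases h2 with h2 | h2 <;> [exact h2.2; omega]⟩
    · obtain ⟨B, hB, h1, h2⟩ := key n hn le_rfl
      exact ⟨B, hB, h1, by rcases h2 with h2 | h2 <;> [omega; exact h2.2]⟩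
  · rintro ⟨h, B₀, hB₀, hn₀, h₀⟩ T hT ⟨t, ht⟩ hc
    have hstep : ∀ j ∈ T, j < n → j + 1 ∈ T := by
      intro j hj hjn
      have hj1 := (mem_Ico.1 (hT hj)).1
      obtain ⟨B, hB, h1, h2⟩ := h j hj1 hjn
      have := mem_dbl.1 (hc B hB _ h1 (mem_dbl.2 (by rwa [show (2 * j + 1) / 2 = j by omega])) h2)
      rwa [show (2 * j + 2) / 2 = j + 1 by omega] at this
    have hup : ∀ s, s ∈ T → ∀ k, s ≤ k → k ≤ n → k ∈ T := by
      intro s hs k hsk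
      induction k, hsk using Nat.le_induction with
      | base => exact fun _ => hs
      | succ k _ ih => exact fun hk => hstep k (ih (by omega)) (by omega)
    have htn := mem_Ico.1 (hT ht)
    have hnT := hup t ht n (by omega) le_rfl
    have h1T : 1 ∈ T := by
      have := mem_dbl.1 (hc B₀ hB₀ _ hn₀
        (mem_dbl.2 (by rwa [show (2 * n + 1) / 2 = n by omega])) h₀)
      simpa using this
    refine hT.antisymm fun k hk => ?_
    rw [mem_Ico] at hk
    exact hup 1 h1T k hk.1 (by omega)

end Parity

end PairProducts

open scoped Classical in
/-- (Lemma of Krawczyk–Speicher type.) If all odd-order free cumulants of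
`x₁, …, x_{2n}` vanish, then
`κₙ(x₂x₃, x₄x₅, …, x_{2n−2}x_{2n−1}, x_{2n}x₁) = Σ_π κ_π(x₁, …, x_{2n})`,
the sum being over all noncrossing partitions `π` of `{1, …, 2n}` refined by the pair
partition `{{1,2}, {3,4}, …, {2n−1,2n}}`. -/
theorem cumulant_of_pair_products
    {A : Type*} [Ring A] [Algebra ℂ A] [StarRing A] [StarModule ℂ A]
    (φ : A →ₗ[ℂ] ℂ) (hφ : IsFaithfulTracialState φ)
    (κ : ∀ n : ℕ, (Fin n → A) → ℂ) (hκ : MomentCumulant φ κ)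
    (n : ℕ) (hn : 0 < n) (x : Fin (2 * n) → A)
    (hodd : ∀ (k : ℕ) (i : Fin (2 * k + 1) → Fin (2 * n)),
      κ (2 * k + 1) (fun j => x (i j)) = 0) :
    κ n (fun j : Fin n =>
        x ⟨2 * j.val + 1, by have := j.isLt; omega⟩ *
        x ⟨(2 * j.val + 2) % (2 * n), Nat.mod_lt _ (by omega)⟩) =
      ∑ π : Finpartition (Finset.univ : Finset (Fin (2 * n))),
        if IsNoncrossing π ∧
            (∀ j : Fin n, ∃ B ∈ π.parts,
              (⟨2 * j.val, by have := j.isLt; omega⟩ : Fin (2 * n)) ∈ B ∧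
              (⟨2 * j.val + 1, by have := j.isLt; omega⟩ : Fin (2 * n)) ∈ B)
          then cumPart κ π x else 0 := by
  classical
  open PairProducts Finset in
  -- `w 1, …, w (2n)` lists the given elements and `w (2n+1) = w 1`.
  let w : ℕ → A := fun m => x ⟨(m + (2 * n - 1)) % (2 * n), Nat.mod_lt _ (by omega)⟩
  have hx : ∀ (i j : ℕ) (hi : i < 2 * n) (hj : j < 2 * n), i = j → x ⟨i, hi⟩ = x ⟨j, hj⟩ := by
    rintro i _ hi hj rfl; rfl
  let s : ∀ m, Fin m ↪o ℕ := fun m =>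
    OrderEmbedding.ofStrictMono (fun i => i.val + 1) (fun i j h => by simpa using h)
  have hs : ∀ m, univ.map (s m).toEmbedding = Ico 1 (m + 1) := by
    intro m
    ext i
    simp only [mem_map, mem_univ, true_and, mem_Ico]
    constructor
    · rintro ⟨j, rfl⟩
      have := j.isLt
      change 1 ≤ j.val + 1 ∧ j.val + 1 < m + 1
      omega
    · intro h
      exact ⟨⟨i - 1, by omega⟩, by change i - 1 + 1 = i; omega⟩
  have hws : ∀ i : Fin (2 * n), w (s (2 * n) i) = x i := by
    intro i
    have hi := i.isLt
    refine hx _ i.val _ hi ?_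
    change (i.val + 1 + (2 * n - 1)) % (2 * n) = i.val
    rw [show i.val + 1 + (2 * n - 1) = i.val + 2 * n by omega, Nat.add_mod_right,
      Nat.mod_eq_of_lt hi]
  have hwN : w (2 * n + 1) = w 1 := by
    refine hx _ _ _ _ ?_
    rw [show 2 * n + 1 + (2 * n - 1) = 1 + (2 * n - 1) + 2 * n by omega, Nat.add_mod_right]
  have hzero : ∀ C : Finset ℕ, ¬ Even C.card → cum κ w C = 0 := by
    intro C hC
    obtain ⟨k, hk⟩ := Nat.not_even_iff_odd.1 hC
    rw [cum_eq κ w C hk]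
    exact hodd k fun i =>
      ⟨(C.orderEmbOfFin hk i + (2 * n - 1)) % (2 * n), Nat.mod_lt _ (by omega)⟩
  have hdbl : dbl (Ico 1 (n + 1)) = rotSet (2 * n + 1) (Ico 1 (2 * n + 1)) := by
    ext m
    rw [mem_dbl, mem_rotSet, mem_Ico, mem_Ico]
    by_cases h1 : m = 1
    · subst h1; rw [rot_one]; omega
    · by_cases h2 : m = 2 * n + 1
      · subst h2; rw [rot_self]; omega
      · rw [rot_of_ne h1 h2]; omega
  have hL : κ n (fun j : Fin n =>
        x ⟨2 * j.val + 1, by have := j.isLt; omega⟩ *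
        x ⟨(2 * j.val + 2) % (2 * n), Nat.mod_lt _ (by omega)⟩) =
      cum κ (fun j => w (2 * j) * w (2 * j + 1)) (Ico 1 (n + 1)) := by
    have hc : (Ico 1 (n + 1)).card = n := by simp
    rw [cum_eq κ _ _ hc]
    congr 1
    funext j
    have hj := j.isLt
    have he : (Ico 1 (n + 1)).orderEmbOfFin hc j = j.val + 1 := by
      rw [← orderEmbOfFin_unique hc (f := s n)
        (fun i => by rw [← hs n]; exact mem_map_of_mem _ (mem_univ i)) (s n).strictMono]
      rfl
    rw [he]
    congr 1
    · refine hx _ _ _ _ ?_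
      rw [show 2 * (j.val + 1) + (2 * n - 1) = 2 * j.val + 1 + 2 * n by omega,
        Nat.add_mod_right, Nat.mod_eq_of_lt (by omega)]
    · refine hx _ _ _ _ ?_
      rw [show 2 * (j.val + 1) + 1 + (2 * n - 1) = 2 * j.val + 2 + 2 * n by omega,
        Nat.add_mod_right]
  let Q : Finset (Finset ℕ) → Prop := fun P =>
    ∀ j : Fin n, ∃ B ∈ P, 2 * j.val + 1 ∈ B ∧ 2 * j.val + 2 ∈ B
  have hR := sum_transport κ (s (2 * n)) w
    (fun π => ∀ j : Fin n, ∃ B ∈ π.parts,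
      (⟨2 * j.val, by have := j.isLt; omega⟩ : Fin (2 * n)) ∈ B ∧
      (⟨2 * j.val + 1, by have := j.isLt; omega⟩ : Fin (2 * n)) ∈ B) Q
    (fun π => forall_congr' fun j => by
      have hj := j.isLt
      have hm : ∀ (i : ℕ) (hi : i < 2 * n) (B : Finset (Fin (2 * n))),
          i + 1 ∈ B.map (s (2 * n)).toEmbedding ↔ (⟨i, hi⟩ : Fin (2 * n)) ∈ B := fun i hi B =>
        mem_map' (s (2 * n)).toEmbedding (a := ⟨i, hi⟩)
      simp only [mem_image, exists_exists_and_eq_and]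
      refine exists_congr fun B => and_congr_right fun _ => ?_
      rw [hm (2 * j.val) (by omega), hm (2 * j.val + 1) (by omega)])
  rw [hs] at hR
  simp only [hws] at hR
  rw [hL, cum_products hκ w _ ⟨1, by rw [mem_Ico]; omega⟩, connNCs, hdbl, sum_filter,
    sum_rotPart subset_rfl]
  refine Eq.trans ?_ hR.symm
  rw [sum_filter]
  refine sum_congr rfl fun P hP => ?_
  have hP := mem_NCs.1 hP
  have hprod : ∏ B ∈ rotPart (2 * n + 1) P, cum κ w B = ∏ B ∈ P, cum κ w B := by
    rw [prod_rotPart]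
    exact prod_congr rfl fun B hB =>
      cum_rotSet hφ.tracial hκ hwN B (hP.subset B hB) (hP.nonempty B hB)
  rw [hprod]
  by_cases heven : ∀ C ∈ P, Even C.card
  · have hP' := isNCPart_rotPart hP (Or.inl subset_rfl)
    rw [← hdbl] at hP'
    have hiff := conn_iff hn hP' (fun C hC => by
      obtain ⟨B, hB, rfl⟩ := mem_image.1 hC
      rw [rotSet, card_map]
      exact heven B hB)
    -- the pair `{1, 2}` corresponds to `{2n+1, 2}` under the swap `1 ↔ 2n+1`
    have hQ : Conn (rotPart (2 * n + 1) P) (Ico 1 (n + 1)) ↔ Q P := by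
      rw [hiff]
      simp only [rotPart, mem_image, exists_exists_and_eq_and, mem_rotSet]
      rw [rot_self, rot_of_ne (N := 2 * n + 1) (i := 2) (by omega) (by omega)]
      constructor
      · rintro ⟨h, h0⟩ ⟨j, hj⟩
        rcases Nat.eq_zero_or_pos j with rfl | hj0
        · simpa using h0
        · have := h j hj0 hj
          rwa [rot_of_ne (by omega) (by omega), rot_of_ne (by omega) (by omega)] at this
      · intro h
        refine ⟨fun j hj0 hj => ?_, by simpa using h ⟨0, hn⟩⟩
        rw [rot_of_ne (by omega) (by omega), rot_of_ne (by omega) (by omega)]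
        exact h ⟨j, hj⟩
    exact if_congr hQ rfl rfl
  · -- an odd block kills the product on both sides, whatever the two conditions say
    push Not at heven
    obtain ⟨C, hC, hCodd⟩ := heven
    rw [prod_eq_zero hC (hzero C hCodd), ite_self, ite_self]
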